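/- Let 0 ≤ ν ≤ 1 and define σ(x) = ν - sinh(νx)/x + cosh(νx) tanh(x)/x for x > 0 (equivalently σ(x) = ν + sinh((1-ν)x)/(x cosh x)). Then the Laplace transform L(σ) is a generalized Stieltjes function of order 2 (hence σ is infinitely divisible), and for x > 0: L(σ)(x) = ν/x + log( Γ((x-ν)/4 + 1) Γ((x+ν)/4) / ( Γ((x-ν)/4 + 1/2) Γ((x+ν)/4 + 1/2) ) ). -/

import Mathlib

open MeasureTheory Filter Set

/-- The Laplace transform of `g`. -/
noncomputable def LaplaceTransform (g : ℝ → ℝ) (x : ℝ) : ℝ :=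
  ∫ t in Set.Ioi (0:ℝ), Real.exp (-x * t) * g t

/-- `f` is completely monotonic on `(0,∞)`. -/
def CompletelyMonotonic (f : ℝ → ℝ) : Prop :=
  (∀ x : ℝ, 0 < x → ContDiffAt ℝ (⊤ : ℕ∞) f x) ∧
  ∀ (n : ℕ) (x : ℝ), 0 < x → 0 ≤ (-1 : ℝ) ^ n * iteratedDeriv n f x

/-- `f` is logarithmically completely monotonic on `(0,∞)`. -/
def LogCompletelyMonotonic (f : ℝ → ℝ) : Prop :=
  (∀ x : ℝ, 0 < x → 0 < f x) ∧ (∀ x : ℝ, 0 < x → ContDiffAt ℝ (⊤ : ℕ∞) f x) ∧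
  CompletelyMonotonic (fun x => -deriv f x / f x)

/-- `f` is a generalized Stieltjes function of order `lam` on `(0,∞)`. -/
def IsGenStieltjes (lam : ℝ) (f : ℝ → ℝ) : Prop :=
  ∃ (μ : Measure ℝ) (c : ℝ), 0 ≤ c ∧ μ (Set.Iio 0) = 0 ∧
    ∀ x : ℝ, 0 < x →
      Integrable (fun t => (x + t) ^ (-lam)) μ ∧
      f x = (∫ t, (x + t) ^ (-lam) ∂μ) + c

/-- Nielsen's beta function. -/
noncomputable def nielsenBeta (x : ℝ) : ℝ :=
  ∫ t in Set.Ioi (0:ℝ), Real.exp (-x * t) / (1 + Real.exp (-t))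

/-!
Write `σ(t) = ν + sinh ((1 - ν) t) / (t cosh t)`. Expanding in powers of `e⁻⁴ᵗ`,
`sinh ((1 - ν) t) / (t cosh t) = ∑ⱼ (e^(-(4j+ν)t) - e^(-(4j+2-ν)t)) (1 - e⁻²ᵗ) / t`.

* Divided by `t`, each term is the Laplace transform of a convolution of Lebesgue measure on two
  intervals. Hence `σ(t) / t` is the Laplace transform of a positive measure `μ`, and Tonelli with
  `∫ t e^(-(x+s)t) dt = (x + s)⁻²` turns `ℒ(σ)(x) = ∫ t e⁻ˣᵗ (σ(t) / t) dt` into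
  `∫ (x + s)⁻² dμ(s)`.
* By Frullani's integral each term has an explicit logarithm as its Laplace transform, and the
  resulting infinite product is a Gamma quotient by Euler's limit formula.
* `σ` is decreasing and `t σ(t)` is increasing. Therefore `x ℒ(σ)(x)` is a Bernstein function,
  whose reciprocal is completely monotonic, and so is `-x ℒ(σ)'(x)`; their product is
  `-ℒ(σ)' / ℒ(σ)`.
-/

open scoped Topology

/-! ### Completely monotonic functions and Bernstein functions -/

theorem iteratedDeriv_mul_neg_one_pow {f g : ℝ → ℝ} {x : ℝ} {n : ℕ}
    (hf : ContDiffAt ℝ n f x) (hg : ContDiffAt ℝ n g x) :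
    (-1) ^ n * iteratedDeriv n (f * g) x = ∑ i ∈ Finset.range (n + 1),
      n.choose i * ((-1) ^ i * iteratedDeriv i f x) *
        ((-1) ^ (n - i) * iteratedDeriv (n - i) g x) := by
  rw [iteratedDeriv_mul hf hg, Finset.mul_sum]
  refine Finset.sum_congr rfl fun i hi ↦ ?_
  have hpow : (-1 : ℝ) ^ n = (-1) ^ i * (-1) ^ (n - i) := by
    rw [← pow_add, Nat.add_sub_cancel' (Finset.mem_range_succ_iff.mp hi)]
  rw [hpow]
  ring

namespace CompletelyMonotonic

variable {f g : ℝ → ℝ}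

theorem congr (hf : CompletelyMonotonic f) (hfg : EqOn g f (Ioi 0)) :
    CompletelyMonotonic g := by
  have heq : ∀ x : ℝ, 0 < x → g =ᶠ[𝓝 x] f := fun x hx ↦
    hfg.eventuallyEq_of_mem (Ioi_mem_nhds hx)
  refine ⟨fun x hx ↦ (hf.1 x hx).congr_of_eventuallyEq (heq x hx), fun n x hx ↦ ?_⟩
  rw [(heq x hx).iteratedDeriv_eq]
  exact hf.2 n x hx

theorem mul (hf : CompletelyMonotonic f) (hg : CompletelyMonotonic g) :
    CompletelyMonotonic (f * g) := by
  refine ⟨fun x hx ↦ (hf.1 x hx).mul (hg.1 x hx), fun n x hx ↦ ?_⟩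
  rw [iteratedDeriv_mul_neg_one_pow ((hf.1 x hx).of_le (mod_cast le_top))
    ((hg.1 x hx).of_le (mod_cast le_top))]
  exact Finset.sum_nonneg fun i _ ↦
    mul_nonneg (mul_nonneg (Nat.cast_nonneg _) (hf.2 i x hx)) (hg.2 (n - i) x hx)

end CompletelyMonotonic

/-- Bernstein functions on `(0, ∞)`: smooth nonnegative functions with completely monotonic
derivative. Their reciprocals are completely monotonic. -/
structure IsBernstein (f : ℝ → ℝ) : Prop where
  contDiffAt : ∀ x : ℝ, 0 < x → ContDiffAt ℝ (⊤ : ℕ∞) f x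
  nonneg : ∀ x : ℝ, 0 < x → 0 ≤ f x
  completelyMonotonic_deriv : CompletelyMonotonic (deriv f)

namespace IsBernstein

variable {f : ℝ → ℝ}

theorem neg_one_pow_mul_iteratedDeriv_succ_nonpos (hf : IsBernstein f) (n : ℕ) {x : ℝ}
    (hx : 0 < x) : (-1) ^ (n + 1) * iteratedDeriv (n + 1) f x ≤ 0 := by
  rw [iteratedDeriv_succ', pow_succ, mul_neg_one, neg_mul, neg_nonpos]
  exact hf.completelyMonotonic_deriv.2 n x hx

/-- Expanding the `n`-th derivative of `f * f⁻¹ = 1` by the Leibniz rule determines the sign of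
the `n`-th derivative of `f⁻¹` from those of lower order. -/
theorem completelyMonotonic_inv (hf : IsBernstein f) (hne : ∀ x : ℝ, 0 < x → f x ≠ 0) :
    CompletelyMonotonic f⁻¹ := by
  have hinv : ∀ x : ℝ, 0 < x → ContDiffAt ℝ (⊤ : ℕ∞) f⁻¹ x := fun x hx ↦
    (hf.contDiffAt x hx).inv (hne x hx)
  refine ⟨hinv, fun n x hx ↦ ?_⟩
  have hpos : 0 < f x := (hf.nonneg x hx).lt_of_ne' (hne x hx)
  induction n using Nat.strong_induction_on with
  | _ n ih =>
  rcases n.eq_zero_or_pos with rfl | hn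
  · simpa using hpos.le
  have hmul_inv : iteratedDeriv n (f * f⁻¹) x = 0 := by
    have hone : f * f⁻¹ =ᶠ[𝓝 x] fun _ ↦ (1 : ℝ) := by
      filter_upwards [Ioi_mem_nhds hx] with y hy using mul_inv_cancel₀ (hne y hy)
    rw [hone.iteratedDeriv_eq, iteratedDeriv_const, if_neg hn.ne']
  have hleibniz := iteratedDeriv_mul_neg_one_pow
    ((hf.contDiffAt x hx).of_le (m := n) (mod_cast le_top)) ((hinv x hx).of_le (mod_cast le_top))
  rw [hmul_inv, mul_zero, Finset.sum_range_succ'] at hleibniz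
  have hlower : ∑ i ∈ Finset.range n, n.choose (i + 1) *
      ((-1) ^ (i + 1) * iteratedDeriv (i + 1) f x) *
        ((-1) ^ (n - (i + 1)) * iteratedDeriv (n - (i + 1)) f⁻¹ x) ≤ 0 :=
    Finset.sum_nonpos fun i _ ↦ mul_nonpos_of_nonpos_of_nonneg
      (mul_nonpos_of_nonneg_of_nonpos (Nat.cast_nonneg _)
        (hf.neg_one_pow_mul_iteratedDeriv_succ_nonpos i hx)) (ih _ (by omega))
  have htop : 0 ≤ f x * ((-1) ^ n * iteratedDeriv n f⁻¹ x) := by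
    simp only [Nat.choose_zero_right, Nat.cast_one, pow_zero, iteratedDeriv_zero, one_mul,
      Nat.sub_zero] at hleibniz
    linarith
  exact nonneg_of_mul_nonneg_right htop hpos

end IsBernstein

/-- The logarithmic derivative factors as `-f' / f = (-x f') * (x f)⁻¹`. -/
theorem logCompletelyMonotonic_of_isBernstein_id_mul {f : ℝ → ℝ}
    (hpos : ∀ x : ℝ, 0 < x → 0 < f x) (hB : IsBernstein fun x ↦ x * f x)
    (hderiv : CompletelyMonotonic fun x ↦ -(x * deriv f x)) : LogCompletelyMonotonic f := by
  refine ⟨hpos, fun x hx ↦ ?_, ?_⟩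
  · refine ((contDiffAt_inv ℝ hx.ne').mul (hB.contDiffAt x hx)).congr_of_eventuallyEq ?_
    filter_upwards [Ioi_mem_nhds hx] with y hy
    exact (inv_mul_cancel_left₀ (ne_of_gt hy) _).symm
  · have hinv := hB.completelyMonotonic_inv fun x hx ↦ (mul_pos hx (hpos x hx)).ne'
    refine (hderiv.mul hinv).congr fun x (hx : 0 < x) ↦ ?_
    have := hpos x hx
    simp only [Pi.mul_apply, Pi.inv_apply]
    field_simp

/-! ### Laplace transforms of functions -/

theorem laplaceTransform_congr {f g : ℝ → ℝ} (hfg : EqOn f g (Ioi 0)) :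
    LaplaceTransform f = LaplaceTransform g :=
  funext fun x ↦ setIntegral_congr_fun measurableSet_Ioi fun t ht ↦
    congrArg (Real.exp (-x * t) * ·) (hfg ht)

/-- Absolute convergence of the Laplace integral of `g` on the whole half-line `(0, ∞)`, so that
`LaplaceTransform g` takes no junk values there. -/
def LaplaceConvergent (g : ℝ → ℝ) : Prop :=
  ∀ x : ℝ, 0 < x → IntegrableOn (fun t ↦ Real.exp (-x * t) * g t) (Ioi 0)

theorem laplaceConvergent_const (c : ℝ) : LaplaceConvergent fun _ ↦ c := fun _ hx ↦
  (exp_neg_integrableOn_Ioi 0 hx).mul_const c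

theorem laplaceTransform_const (c : ℝ) {x : ℝ} (hx : 0 < x) :
    LaplaceTransform (fun _ ↦ c) x = c / x := by
  simp only [LaplaceTransform]
  rw [integral_mul_const, integral_exp_mul_Ioi (neg_neg_of_pos hx)]
  simp [div_eq_inv_mul]

namespace LaplaceConvergent

variable {f g : ℝ → ℝ}

theorem aestronglyMeasurable (hg : LaplaceConvergent g) :
    AEStronglyMeasurable g (volume.restrict (Ioi 0)) := by
  have hmul : AEStronglyMeasurable (fun t ↦ Real.exp t * (Real.exp (-1 * t) * g t))
      (volume.restrict (Ioi 0)) :=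
    Real.continuous_exp.aestronglyMeasurable.mul (hg 1 one_pos).aestronglyMeasurable
  refine hmul.congr (.of_forall fun t ↦ ?_)
  simp only
  rw [← mul_assoc, ← Real.exp_add]
  simp

theorem mono (hg : LaplaceConvergent g) (hf : AEStronglyMeasurable f (volume.restrict (Ioi 0)))
    (hle : ∀ t : ℝ, 0 < t → |f t| ≤ g t) : LaplaceConvergent f := fun x hx ↦ by
  refine (hg x hx).mono' ((by fun_prop : Continuous fun t ↦ Real.exp (-x * t))
    |>.aestronglyMeasurable.mul hf) ?_
  refine ae_restrict_of_forall_mem measurableSet_Ioi fun t ht ↦ ?_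
  rw [Real.norm_eq_abs, abs_mul, Real.abs_exp]
  gcongr
  exact hle t ht

theorem congr (hg : LaplaceConvergent g) (hfg : EqOn f g (Ioi 0)) : LaplaceConvergent f :=
  fun x hx ↦ (hg x hx).congr_fun (fun t ht ↦ by simp only [hfg ht]) measurableSet_Ioi

theorem sub (hf : LaplaceConvergent f) (hg : LaplaceConvergent g) :
    LaplaceConvergent fun t ↦ f t - g t := fun x hx ↦ by
  simp only [mul_sub]
  exact (hf x hx).sub (hg x hx)

theorem id_mul (hg : LaplaceConvergent g) : LaplaceConvergent fun t ↦ t * g t := fun x hx ↦ by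
  have hhalf := ((hg (x / 2) (half_pos hx)).norm).const_mul (2 / x)
  refine hhalf.mono' (((by fun_prop : Continuous fun t ↦ Real.exp (-x * t))
    |>.aestronglyMeasurable).mul
      (continuous_id.aestronglyMeasurable.mul hg.aestronglyMeasurable)) ?_
  refine ae_restrict_of_forall_mem measurableSet_Ioi fun t (ht : 0 < t) ↦ ?_
  have hlin : t ≤ 2 / x * Real.exp (x / 2 * t) := by
    have hexp := Real.add_one_le_exp (x / 2 * t)
    rw [div_mul_eq_mul_div, le_div_iff₀ hx]
    linarith
  calc ‖Real.exp (-x * t) * (t * g t)‖ = Real.exp (-x * t) * (t * |g t|) := by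
        rw [Real.norm_eq_abs, abs_mul, abs_mul, Real.abs_exp, abs_of_pos ht]
    _ ≤ Real.exp (-x * t) * (2 / x * Real.exp (x / 2 * t) * |g t|) := by gcongr
    _ = 2 / x * ‖Real.exp (-(x / 2) * t) * g t‖ := by
        rw [Real.norm_eq_abs, abs_mul, Real.abs_exp,
          show -(x / 2) * t = -x * t + x / 2 * t by ring, Real.exp_add]
        ring

theorem laplaceTransform_add (hf : LaplaceConvergent f) (hg : LaplaceConvergent g) {x : ℝ}
    (hx : 0 < x) : LaplaceTransform (fun t ↦ f t + g t) x =
      LaplaceTransform f x + LaplaceTransform g x := by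
  simp only [LaplaceTransform, mul_add]
  exact integral_add (hf x hx) (hg x hx)

theorem laplaceTransform_sub (hf : LaplaceConvergent f) (hg : LaplaceConvergent g) {x : ℝ}
    (hx : 0 < x) : LaplaceTransform (fun t ↦ f t - g t) x =
      LaplaceTransform f x - LaplaceTransform g x := by
  simp only [LaplaceTransform, mul_sub]
  exact integral_sub (hf x hx) (hg x hx)

theorem laplaceTransform_pos (hg : LaplaceConvergent g) (hpos : ∀ t : ℝ, 0 < t → 0 < g t)
    {x : ℝ} (hx : 0 < x) : 0 < LaplaceTransform g x := by
  have hintegrand : ∀ t ∈ Ioi (0 : ℝ), 0 < Real.exp (-x * t) * g t := fun t ht ↦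
    mul_pos (Real.exp_pos _) (hpos t ht)
  rw [LaplaceTransform, setIntegral_pos_iff_support_of_nonneg_ae
    (ae_restrict_of_forall_mem measurableSet_Ioi fun t ht ↦ (hintegrand t ht).le) (hg x hx)]
  have hsupport : Ioi (0 : ℝ) ⊆ Function.support (fun t ↦ Real.exp (-x * t) * g t) ∩ Ioi 0 :=
    fun t ht ↦ ⟨(hintegrand t ht).ne', ht⟩
  exact (by simp : (0 : ENNReal) < volume (Ioi (0 : ℝ))).trans_le (measure_mono hsupport)

theorem hasSum_laplaceTransform {ι : Type*} [Countable ι] {G : ι → ℝ → ℝ}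
    (hG : ∀ i, LaplaceConvergent (G i)) (hnonneg : ∀ i t, 0 < t → 0 ≤ G i t)
    (hsum : ∀ t : ℝ, 0 < t → HasSum (fun i ↦ G i t) (g t)) {x : ℝ} (hx : 0 < x)
    (hsummable : Summable fun i ↦ LaplaceTransform (G i) x) :
    HasSum (fun i ↦ LaplaceTransform (G i) x) (LaplaceTransform g x) := by
  have hnorm : ∀ i, ∫ t in Ioi 0, ‖Real.exp (-x * t) * G i t‖ = LaplaceTransform (G i) x :=
    fun i ↦ setIntegral_congr_fun measurableSet_Ioi fun t ht ↦
      Real.norm_of_nonneg (mul_nonneg (Real.exp_pos _).le (hnonneg i t ht))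
  have htsum : ∫ t in Ioi 0, ∑' i, Real.exp (-x * t) * G i t = LaplaceTransform g x :=
    setIntegral_congr_fun measurableSet_Ioi fun t ht ↦ ((hsum t ht).mul_left _).tsum_eq
  rw [← htsum]
  exact hasSum_integral_of_summable_integral_norm (fun i ↦ hG i x hx) (by simpa only [hnorm])

theorem laplaceTransform_deriv {h h' : ℝ → ℝ} {c : ℝ} (hh : LaplaceConvergent h)
    (hh' : LaplaceConvergent h') (hderiv : ∀ t : ℝ, 0 < t → HasDerivAt h (h' t) t)
    (hzero : Tendsto h (𝓝[>] 0) (𝓝 c)) {x : ℝ} (hx : 0 < x) :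
    LaplaceTransform h' x = x * LaplaceTransform h x - c := by
  have hexp : ∀ t : ℝ, HasDerivAt (fun t ↦ Real.exp (-x * t)) (-x * Real.exp (-x * t)) t :=
    fun t ↦ by simpa [mul_comm] using ((hasDerivAt_id t).const_mul (-x)).exp
  have hint : IntegrableOn (fun t ↦ -x * Real.exp (-x * t) * h t) (Ioi 0) := by
    simp only [mul_assoc]
    exact (hh x hx).const_mul (-x)
  have hinfty : Tendsto (fun t ↦ Real.exp (-x * t) * h t) atTop (𝓝 0) :=
    tendsto_zero_of_hasDerivAt_of_integrableOn_Ioi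
      (fun t ht ↦ (hexp t).mul (hderiv t ht)) (hint.add (hh' x hx)) (hh x hx)
  have hzero' : Tendsto (fun t ↦ Real.exp (-x * t) * h t) (𝓝[>] 0) (𝓝 c) := by
    have hcont : ContinuousAt (fun t ↦ Real.exp (-x * t)) 0 := by fun_prop
    simpa using (hcont.tendsto.mono_left nhdsWithin_le_nhds).mul hzero
  have hparts := integral_Ioi_mul_deriv_eq_deriv_mul (fun t _ ↦ hexp t) hderiv
    (hh' x hx) hint hzero' hinfty
  simp only [mul_assoc, integral_const_mul] at hparts
  simp only [LaplaceTransform]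
  linarith

end LaplaceConvergent

/-- The measure on `(0, ∞)` with density `g`. Up to the reflection `t ↦ -t`, its moment generating
function is the Laplace transform of `g`. -/
noncomputable def densityMeasure (g : ℝ → ℝ) : Measure ℝ :=
  (volume.restrict (Ioi 0)).withDensity fun t ↦ ENNReal.ofReal (g t)

namespace LaplaceConvergent

open ProbabilityTheory

variable {g : ℝ → ℝ}

theorem integral_densityMeasure (hg : LaplaceConvergent g) (hnonneg : ∀ t : ℝ, 0 < t → 0 ≤ g t)
    (F : ℝ → ℝ) : ∫ t, F t ∂densityMeasure g = ∫ t in Ioi 0, F t * g t := by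
  rw [densityMeasure, integral_withDensity_eq_integral_toReal_smul₀
    hg.aestronglyMeasurable.aemeasurable.ennreal_ofReal (by simp)]
  refine setIntegral_congr_fun measurableSet_Ioi fun t ht ↦ ?_
  simp [ENNReal.toReal_ofReal (hnonneg t ht), mul_comm]

theorem laplaceTransform_eq_mgf (hg : LaplaceConvergent g)
    (hnonneg : ∀ t : ℝ, 0 < t → 0 ≤ g t) :
    LaplaceTransform g = mgf (fun t ↦ -t) (densityMeasure g) := by
  funext x
  simp [LaplaceTransform, mgf, hg.integral_densityMeasure hnonneg]

theorem mem_interior_integrableExpSet (hg : LaplaceConvergent g)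
    (hnonneg : ∀ t : ℝ, 0 < t → 0 ≤ g t) {x : ℝ} (hx : 0 < x) :
    x ∈ interior (integrableExpSet (fun t ↦ -t) (densityMeasure g)) := by
  suffices hsub : Ioi (0 : ℝ) ⊆ integrableExpSet (fun t ↦ -t) (densityMeasure g) from
    interior_maximal hsub isOpen_Ioi hx
  intro y hy
  change Integrable _ _
  rw [densityMeasure, integrable_withDensity_iff_integrable_smul₀'
    hg.aestronglyMeasurable.aemeasurable.ennreal_ofReal (by simp)]
  refine (hg y hy).congr_fun (fun t ht ↦ ?_) measurableSet_Ioi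
  simp [ENNReal.toReal_ofReal (hnonneg t ht), mul_comm]

theorem completelyMonotonic_laplaceTransform (hg : LaplaceConvergent g)
    (hnonneg : ∀ t : ℝ, 0 < t → 0 ≤ g t) : CompletelyMonotonic (LaplaceTransform g) := by
  rw [hg.laplaceTransform_eq_mgf hnonneg]
  refine ⟨fun x hx ↦ (analyticAt_mgf (hg.mem_interior_integrableExpSet hnonneg hx)).contDiffAt,
    fun n x hx ↦ ?_⟩
  rw [iteratedDeriv_mgf (hg.mem_interior_integrableExpSet hnonneg hx),
    hg.integral_densityMeasure hnonneg, ← integral_const_mul]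
  refine setIntegral_nonneg measurableSet_Ioi fun t (ht : 0 < t) ↦ ?_
  have hsign : (-1) ^ n * ((-t) ^ n * Real.exp (x * -t) * g t) =
      t ^ n * Real.exp (x * -t) * g t := by
    rw [mul_assoc, ← mul_assoc, ← mul_pow, neg_one_mul, neg_neg, ← mul_assoc]
  rw [hsign]
  have := hnonneg t ht
  positivity

theorem hasDerivAt_laplaceTransform (hg : LaplaceConvergent g)
    (hnonneg : ∀ t : ℝ, 0 < t → 0 ≤ g t) {x : ℝ} (hx : 0 < x) :
    HasDerivAt (LaplaceTransform g) (-LaplaceTransform (fun t ↦ t * g t) x) x := by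
  have hmgf := hasDerivAt_mgf (hg.mem_interior_integrableExpSet hnonneg hx)
  rw [← hg.laplaceTransform_eq_mgf hnonneg, hg.integral_densityMeasure hnonneg] at hmgf
  convert hmgf using 1
  rw [LaplaceTransform, ← integral_neg]
  refine integral_congr_ae (.of_forall fun t ↦ ?_)
  simp only [mul_neg, neg_mul]
  ring

end LaplaceConvergent

section LogCriterion

variable {s s' : ℝ → ℝ}

theorem LaplaceConvergent.add_id_mul_deriv (hs : LaplaceConvergent s)
    (hderiv : ∀ t : ℝ, 0 < t → HasDerivAt s (s' t) t) (hanti : ∀ t : ℝ, 0 < t → s' t ≤ 0)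
    (hmono : ∀ t : ℝ, 0 < t → 0 ≤ s t + t * s' t) :
    LaplaceConvergent fun t ↦ s t + t * s' t := by
  have hs' : AEStronglyMeasurable s' (volume.restrict (Ioi 0)) :=
    (stronglyMeasurable_deriv s).aestronglyMeasurable.congr <|
      ae_restrict_of_forall_mem measurableSet_Ioi fun t ht ↦ (hderiv t ht).deriv
  refine hs.mono (hs.aestronglyMeasurable.add
    (continuous_id.aestronglyMeasurable.mul hs')) fun t ht ↦ ?_
  rw [abs_of_nonneg (hmono t ht)]
  linarith [mul_nonpos_of_nonneg_of_nonpos ht.le (hanti t ht)]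

theorem id_mul_laplaceTransform_id_mul (hs : LaplaceConvergent s)
    (hs' : LaplaceConvergent fun t ↦ s t + t * s' t)
    (hderiv : ∀ t : ℝ, 0 < t → HasDerivAt s (s' t) t)
    (hzero : Tendsto (fun t ↦ t * s t) (𝓝[>] 0) (𝓝 0)) {x : ℝ} (hx : 0 < x) :
    x * LaplaceTransform (fun t ↦ t * s t) x = LaplaceTransform (fun t ↦ s t + t * s' t) x := by
  have hprod : ∀ t : ℝ, 0 < t → HasDerivAt (fun t ↦ t * s t) (s t + t * s' t) t := fun t ht ↦
    ((hasDerivAt_id t).mul (hderiv t ht)).congr_deriv (by simp)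
  rw [hs.id_mul.laplaceTransform_deriv hs' hprod hzero hx, sub_zero]

/-- If `s` is decreasing and `t ↦ t * s t` is increasing, then `x ℒ(s)(x)` is a Bernstein function
with derivative `ℒ(-t s')`, and `-x ℒ(s)'(x) = ℒ((t s)')(x)` is completely monotonic. -/
theorem logCompletelyMonotonic_laplaceTransform (hs : LaplaceConvergent s)
    (hpos : ∀ t : ℝ, 0 < t → 0 < s t) (hderiv : ∀ t : ℝ, 0 < t → HasDerivAt s (s' t) t)
    (hanti : ∀ t : ℝ, 0 < t → s' t ≤ 0) (hmono : ∀ t : ℝ, 0 < t → 0 ≤ s t + t * s' t)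
    (hzero : Tendsto (fun t ↦ t * s t) (𝓝[>] 0) (𝓝 0)) :
    LogCompletelyMonotonic (LaplaceTransform s) := by
  have hnonneg : ∀ t : ℝ, 0 < t → 0 ≤ s t := fun t ht ↦ (hpos t ht).le
  have hcm := hs.completelyMonotonic_laplaceTransform hnonneg
  have hs' := hs.add_id_mul_deriv hderiv hanti hmono
  have hL_deriv : ∀ x : ℝ, 0 < x → HasDerivAt (LaplaceTransform s)
      (-LaplaceTransform (fun t ↦ t * s t) x) x :=
    fun x hx ↦ hs.hasDerivAt_laplaceTransform hnonneg hx
  have hL_parts : ∀ x : ℝ, 0 < x → x * LaplaceTransform (fun t ↦ t * s t) x =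
      LaplaceTransform (fun t ↦ s t + t * s' t) x :=
    fun x hx ↦ id_mul_laplaceTransform_id_mul hs hs' hderiv hzero hx
  have hB_deriv : EqOn (deriv fun x ↦ x * LaplaceTransform s x)
      (LaplaceTransform fun t ↦ s t - (s t + t * s' t)) (Ioi 0) := fun x hx ↦ by
    have hprod := ((hasDerivAt_id x).mul (hL_deriv x hx)).deriv
    simp only [id_eq, one_mul, mul_neg] at hprod
    rw [hs.laplaceTransform_sub hs' hx, ← hL_parts x hx]
    exact hprod
  have hB : IsBernstein fun x ↦ x * LaplaceTransform s x := by
    refine ⟨fun x hx ↦ contDiffAt_id.mul (hcm.1 x hx),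
      fun x hx ↦ mul_nonneg hx.le (hs.laplaceTransform_pos hpos hx).le, ?_⟩
    refine ((hs.sub hs').completelyMonotonic_laplaceTransform fun t ht ↦ ?_).congr hB_deriv
    linarith [mul_nonpos_of_nonneg_of_nonpos ht.le (hanti t ht)]
  refine logCompletelyMonotonic_of_isBernstein_id_mul
    (fun x hx ↦ hs.laplaceTransform_pos hpos hx) hB
    ((hs'.completelyMonotonic_laplaceTransform hmono).congr fun x hx ↦ ?_)
  rw [(hL_deriv x hx).deriv, mul_neg, neg_neg, hL_parts x hx]

end LogCriterion

/-- The integrand `(e⁻ᵃᵗ - e⁻ᵇᵗ) / t` of Frullani's integral. For `a ≤ b` it is the Laplace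
transform of Lebesgue measure on `(a, b]`. -/
noncomputable def frullaniKernel (a b t : ℝ) : ℝ :=
  (Real.exp (-t * a) - Real.exp (-t * b)) / t

section FrullaniKernel

variable {a b t x : ℝ}

theorem frullaniKernel_nonneg (hab : a ≤ b) (ht : 0 < t) : 0 ≤ frullaniKernel a b t :=
  div_nonneg (sub_nonneg.mpr (Real.exp_le_exp.mpr
    (mul_le_mul_of_nonpos_left hab (neg_nonpos.mpr ht.le)))) ht.le

theorem frullaniKernel_le (ha : 0 ≤ a) (hab : a ≤ b) (ht : 0 < t) :
    frullaniKernel a b t ≤ b - a := by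
  have hfactor : Real.exp (-t * b) = Real.exp (-t * a) * Real.exp (-(t * (b - a))) := by
    rw [← Real.exp_add]
    ring_nf
  have hle_one : Real.exp (-t * a) ≤ 1 := Real.exp_le_one_iff.mpr (by nlinarith)
  have hgap : 1 - Real.exp (-(t * (b - a))) ≤ t * (b - a) := by
    linarith [Real.one_sub_le_exp_neg (t * (b - a))]
  rw [frullaniKernel, div_le_iff₀ ht, hfactor, ← mul_one_sub, mul_comm (b - a)]
  calc Real.exp (-t * a) * (1 - Real.exp (-(t * (b - a))))
      ≤ Real.exp (-t * a) * (t * (b - a)) := by gcongr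
    _ ≤ t * (b - a) := mul_le_of_le_one_left (mul_nonneg ht.le (sub_nonneg.mpr hab)) hle_one

theorem laplaceConvergent_frullaniKernel (ha : 0 ≤ a) (hab : a ≤ b) :
    LaplaceConvergent (frullaniKernel a b) := by
  have hmeas : Measurable (frullaniKernel a b) := by unfold frullaniKernel; fun_prop
  refine (laplaceConvergent_const (b - a)).mono hmeas.aestronglyMeasurable fun t ht ↦ ?_
  rw [abs_of_nonneg (frullaniKernel_nonneg hab ht)]
  exact frullaniKernel_le ha hab ht

theorem exp_neg_mul_mul_frullaniKernel :
    Real.exp (-x * t) * frullaniKernel a b t =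
      t⁻¹ * (Real.exp (-((x + a) * t)) - Real.exp (-((x + b) * t))) := by
  rw [frullaniKernel, mul_div_assoc', mul_sub, ← Real.exp_add, ← Real.exp_add, div_eq_inv_mul]
  ring_nf

theorem laplaceTransform_frullaniKernel (ha : 0 ≤ a) (hab : a ≤ b) (hx : 0 < x) :
    LaplaceTransform (frullaniKernel a b) x = Real.log ((x + b) / (x + a)) := by
  have hcont : Continuous fun t : ℝ ↦ Real.exp (-t) := by fun_prop
  have hconv := laplaceConvergent_frullaniKernel ha hab x hx
  simp only [LaplaceTransform, exp_neg_mul_mul_frullaniKernel] at hconv ⊢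
  have hfrullani := Frullani.integral_Ioi_eq (f := fun t : ℝ ↦ Real.exp (-t)) (a := x + a)
    (b := x + b) (hcont.locallyIntegrable.locallyIntegrableOn _) (by linarith) (by linarith)
    (hcont.tendsto' 0 1 (by simp) |>.mono_left nhdsWithin_le_nhds)
    Real.tendsto_exp_neg_atTop_nhds_zero hconv
  simpa using hfrullani

end FrullaniKernel

/-! ### Laplace transforms of measures and Stieltjes functions -/

/-- The Laplace transform of a measure on `ℝ`, with values in `[0, ∞]` so that no convergence
has to be assumed. -/
noncomputable def measureLaplace (μ : Measure ℝ) (t : ℝ) : ENNReal :=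
  ∫⁻ s, ENNReal.ofReal (Real.exp (-t * s)) ∂μ

section MeasureLaplace

variable (μ ν : Measure ℝ) (t : ℝ)

theorem measureLaplace_add : measureLaplace (μ + ν) t = measureLaplace μ t + measureLaplace ν t :=
  lintegral_add_measure _ _ _

theorem measureLaplace_smul (c : ENNReal) : measureLaplace (c • μ) t = c * measureLaplace μ t :=
  lintegral_smul_measure _ _

theorem measureLaplace_sum {ι : Type*} (μ : ι → Measure ℝ) :
    measureLaplace (Measure.sum μ) t = ∑' i, measureLaplace (μ i) t :=
  lintegral_sum_measure _ _

theorem measureLaplace_conv [SFinite μ] [SFinite ν] :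
    measureLaplace (μ ∗ ν) t = measureLaplace μ t * measureLaplace ν t := by
  simp only [measureLaplace]
  rw [Measure.lintegral_conv (by fun_prop)]
  simp only [mul_add, Real.exp_add, ENNReal.ofReal_mul (Real.exp_nonneg _)]
  exact lintegral_lintegral_mul (by fun_prop) (by fun_prop)

variable {t}

theorem measureLaplace_restrict_Ioi_zero (ht : 0 < t) :
    measureLaplace (volume.restrict (Ioi 0)) t = ENNReal.ofReal (1 / t) := by
  rw [measureLaplace, ← ofReal_integral_eq_lintegral_ofReal
    (exp_neg_integrableOn_Ioi 0 ht) (.of_forall fun s ↦ Real.exp_nonneg _),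
    integral_exp_mul_Ioi (neg_neg_of_pos ht)]
  simp

theorem measureLaplace_restrict_Ioc (ht : t ≠ 0) {a b : ℝ} (hab : a ≤ b) :
    measureLaplace (volume.restrict (Ioc a b)) t = ENNReal.ofReal (frullaniKernel a b t) := by
  have hderiv : ∀ s : ℝ, HasDerivAt (fun s ↦ -Real.exp (-t * s) / t) (Real.exp (-t * s)) s :=
    fun s ↦ by
      have hexp := (((hasDerivAt_id s).const_mul (-t)).exp.neg).div_const t
      simpa [mul_div_assoc, ht] using hexp
  have hcont : Continuous fun s ↦ Real.exp (-t * s) := by fun_prop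
  rw [measureLaplace, ← ofReal_integral_eq_lintegral_ofReal
    hcont.integrableOn_Ioc (.of_forall fun s ↦ Real.exp_nonneg _),
    ← intervalIntegral.integral_of_le hab,
    intervalIntegral.integral_eq_sub_of_hasDerivAt (fun s _ ↦ hderiv s)
      (hcont.intervalIntegrable a b), frullaniKernel]
  ring_nf

end MeasureLaplace

theorem conv_Iio_zero_eq_zero {μ ν : Measure ℝ} [SFinite μ] [SFinite ν]
    (hμ : μ (Iio 0) = 0) (hν : ν (Iio 0) = 0) : (μ ∗ ν) (Iio 0) = 0 := by
  have hsub : (fun p : ℝ × ℝ ↦ p.1 + p.2) ⁻¹' Iio 0 ⊆ Iio 0 ×ˢ univ ∪ univ ×ˢ Iio 0 := by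
    rintro ⟨r, s⟩ hrs
    rcases lt_or_ge r 0 with hr | hr
    · exact .inl ⟨hr, mem_univ s⟩
    · exact .inr ⟨mem_univ r, (le_add_of_nonneg_left hr).trans_lt hrs⟩
  rw [Measure.conv, Measure.map_apply (by fun_prop) measurableSet_Iio]
  refine measure_mono_null hsub (measure_union_null ?_ ?_) <;> simp [hμ, hν]

theorem lintegral_rpow_mul_exp_neg {a y : ℝ} (ha : 0 < a) (hy : 0 < y) :
    ∫⁻ t in Ioi 0, ENNReal.ofReal (t ^ (a - 1) * Real.exp (-y * t)) =
      ENNReal.ofReal (Real.Gamma a * y ^ (-a)) := by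
  have hint : IntegrableOn (fun t : ℝ ↦ t ^ (a - 1) * Real.exp (-y * t)) (Ioi 0) := by
    simpa using integrableOn_rpow_mul_exp_neg_mul_rpow (p := 1) (by linarith) one_pos hy
  rw [← ofReal_integral_eq_lintegral_ofReal hint (ae_restrict_of_forall_mem measurableSet_Ioi
    fun t ht ↦ mul_nonneg (Real.rpow_nonneg (le_of_lt ht) _) (Real.exp_nonneg _))]
  simp only [neg_mul]
  rw [Real.integral_rpow_mul_exp_neg_mul_Ioi ha hy, one_div, Real.inv_rpow hy.le,
    Real.rpow_neg hy.le, mul_comm]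

theorem lintegral_rpow_mul_exp_neg_mul_measureLaplace {μ : Measure ℝ} [SFinite μ] {a : ℝ}
    (ha : 0 < a) (hμ : μ (Iio 0) = 0) {x : ℝ} (hx : 0 < x) :
    ∫⁻ t in Ioi 0, ENNReal.ofReal (t ^ (a - 1) * Real.exp (-x * t)) * measureLaplace μ t =
      ENNReal.ofReal (Real.Gamma a) * ∫⁻ s, ENNReal.ofReal ((x + s) ^ (-a)) ∂μ := by
  have hμ' : ∀ᵐ s ∂μ, 0 ≤ s := by simpa [ae_iff, Iio] using hμ
  calc ∫⁻ t in Ioi 0, ENNReal.ofReal (t ^ (a - 1) * Real.exp (-x * t)) * measureLaplace μ t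
      = ∫⁻ t in Ioi 0, (∫⁻ s, ENNReal.ofReal (t ^ (a - 1) * Real.exp (-(x + s) * t)) ∂μ) := by
        refine setLIntegral_congr_fun measurableSet_Ioi fun t (ht : 0 < t) ↦ ?_
        simp only [measureLaplace]
        rw [← lintegral_const_mul _ (by fun_prop)]
        refine lintegral_congr fun s ↦ ?_
        rw [← ENNReal.ofReal_mul (by positivity), mul_assoc, ← Real.exp_add]
        ring_nf
    _ = ∫⁻ s, (∫⁻ t in Ioi 0, ENNReal.ofReal (t ^ (a - 1) * Real.exp (-(x + s) * t))) ∂μ :=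
        lintegral_lintegral_swap (by simp only [Function.uncurry_def]; fun_prop)
    _ = ∫⁻ s, ENNReal.ofReal (Real.Gamma a) * ENNReal.ofReal ((x + s) ^ (-a)) ∂μ := by
        refine lintegral_congr_ae ?_
        filter_upwards [hμ'] with s hs
        rw [lintegral_rpow_mul_exp_neg ha (by linarith),
          ENNReal.ofReal_mul (Real.Gamma_pos_of_pos ha).le]
    _ = ENNReal.ofReal (Real.Gamma a) * ∫⁻ s, ENNReal.ofReal ((x + s) ^ (-a)) ∂μ :=
        lintegral_const_mul _ (by fun_prop)

theorem isGenStieltjes_laplaceTransform_rpow_mul {μ : Measure ℝ} [SFinite μ] {φ : ℝ → ℝ} {a : ℝ}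
    (ha : 0 < a) (hμ : μ (Iio 0) = 0) (hφ : ∀ t : ℝ, 0 < t → 0 ≤ φ t)
    (hμφ : ∀ t : ℝ, 0 < t → measureLaplace μ t = ENNReal.ofReal (φ t))
    (hconv : LaplaceConvergent fun t ↦ t ^ (a - 1) * φ t) :
    IsGenStieltjes a (LaplaceTransform fun t ↦ t ^ (a - 1) * φ t) := by
  refine ⟨ENNReal.ofReal (Real.Gamma a) • μ, 0, le_rfl, by simp [hμ], fun x hx ↦ ?_⟩
  have hintegrand : ∀ t ∈ Ioi (0 : ℝ), 0 ≤ Real.exp (-x * t) * (t ^ (a - 1) * φ t) :=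
    fun t ht ↦ mul_nonneg (Real.exp_nonneg _)
      (mul_nonneg (Real.rpow_nonneg (le_of_lt ht) _) (hφ t ht))
  have hlintegral : ∫⁻ s, ENNReal.ofReal ((x + s) ^ (-a)) ∂(ENNReal.ofReal (Real.Gamma a) • μ) =
      ENNReal.ofReal (LaplaceTransform (fun t ↦ t ^ (a - 1) * φ t) x) := by
    rw [lintegral_smul_measure, smul_eq_mul,
      ← lintegral_rpow_mul_exp_neg_mul_measureLaplace ha hμ hx, LaplaceTransform,
      ofReal_integral_eq_lintegral_ofReal (hconv x hx)
        (ae_restrict_of_forall_mem measurableSet_Ioi hintegrand)]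
    refine setLIntegral_congr_fun measurableSet_Ioi fun t (ht : 0 < t) ↦ ?_
    simp only
    rw [hμφ t ht, ← ENNReal.ofReal_mul (by positivity)]
    ring_nf
  have hmeas : Measurable fun s ↦ (x + s) ^ (-a) := by fun_prop
  have hnonneg : 0 ≤ᵐ[ENNReal.ofReal (Real.Gamma a) • μ] fun s ↦ (x + s) ^ (-a) := by
    have hμ' : ∀ᵐ s ∂μ, 0 ≤ s := by simpa [ae_iff, Iio] using hμ
    filter_upwards [Measure.ae_smul_measure hμ' _] with s hs
    exact Real.rpow_nonneg (by linarith) _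
  refine ⟨⟨hmeas.aestronglyMeasurable, ?_⟩, ?_⟩
  · rw [hasFiniteIntegral_iff_ofReal hnonneg, hlintegral]
    exact ENNReal.ofReal_lt_top
  · rw [integral_eq_lintegral_of_nonneg_ae hnonneg hmeas.aestronglyMeasurable, hlintegral,
      add_zero, ENNReal.toReal_ofReal]
    exact setIntegral_nonneg measurableSet_Ioi hintegrand

/-! ### Hyperbolic inequalities and the monotonicity of `σ` and `t ↦ t σ(t)` -/

theorem sinh_le_mul_cosh {u : ℝ} (hu : 0 ≤ u) : Real.sinh u ≤ u * Real.cosh u := by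
  have hmono : ∀ v ∈ interior (Ici (0 : ℝ)),
      0 ≤ deriv (fun v ↦ v * Real.cosh v - Real.sinh v) v := fun v hv ↦ by
    rw [interior_Ici, mem_Ioi] at hv
    have hderiv := (((hasDerivAt_id v).mul (Real.hasDerivAt_cosh v)).sub
      (Real.hasDerivAt_sinh v)).deriv
    refine (mul_nonneg hv.le (Real.sinh_nonneg_iff.mpr hv.le)).trans_eq (Eq.trans ?_ hderiv.symm)
    simp
  have hle := monotoneOn_of_deriv_nonneg (convex_Ici 0)
    (by fun_prop : Continuous fun v ↦ v * Real.cosh v - Real.sinh v).continuousOn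
    (by fun_prop) hmono self_mem_Ici hu hu
  simpa using hle

theorem cosh_le_cosh_of_nonneg {u t : ℝ} (hu : 0 ≤ u) (hut : u ≤ t) :
    Real.cosh u ≤ Real.cosh t :=
  Real.cosh_strictMonoOn.monotoneOn hu (hu.trans hut) hut

theorem sinh_mul_sinh_le_cosh_mul_cosh (u t : ℝ) :
    Real.sinh u * Real.sinh t ≤ Real.cosh u * Real.cosh t := by
  have := Real.cosh_pos (t - u)
  rw [Real.cosh_sub] at this
  linarith

theorem sinh_mul_cosh_le_cosh_mul_sinh {u t : ℝ} (hut : u ≤ t) :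
    Real.sinh u * Real.cosh t ≤ Real.cosh u * Real.sinh t := by
  have hsub : 0 ≤ Real.sinh (t - u) := Real.sinh_nonneg_iff.mpr (sub_nonneg.mpr hut)
  rw [Real.sinh_sub] at hsub
  linarith

/-- After division by `cosh u * cosh t` this reads `u ≤ tanh u * (1 + t * tanh t)`. It is enough
to treat `t = u`, where it amounts to `u ≤ sinh u * cosh u`. -/
theorem mul_cosh_mul_cosh_le {u t : ℝ} (hu : 0 ≤ u) (hut : u ≤ t) :
    u * Real.cosh u * Real.cosh t ≤ Real.sinh u * (Real.cosh t + t * Real.sinh t) := by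
  have hsinh : 0 ≤ Real.sinh u := Real.sinh_nonneg_iff.mpr hu
  have ht := Real.cosh_pos t
  have hself : u ≤ Real.sinh u * Real.cosh u :=
    (Real.self_le_sinh_iff.mpr hu).trans (le_mul_of_one_le_right hsinh (Real.one_le_cosh u))
  have htanh : u * (Real.sinh u * Real.cosh t) ≤ t * (Real.cosh u * Real.sinh t) :=
    mul_le_mul hut (sinh_mul_cosh_le_cosh_mul_sinh hut) (mul_nonneg hsinh ht.le) (hu.trans hut)
  refine le_of_mul_le_mul_left ?_ (Real.cosh_pos u)
  calc Real.cosh u * (u * Real.cosh u * Real.cosh t)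
      = u * Real.cosh t + Real.sinh u * (u * (Real.sinh u * Real.cosh t)) := by
        linear_combination u * Real.cosh t * Real.cosh_sq u
    _ ≤ Real.sinh u * Real.cosh u * Real.cosh t +
        Real.sinh u * (t * (Real.cosh u * Real.sinh t)) := by gcongr
    _ = Real.cosh u * (Real.sinh u * (Real.cosh t + t * Real.sinh t)) := by ring

/-- The function `σ` of the theorem, in its second form. -/
noncomputable def sigmaFun (ν t : ℝ) : ℝ :=
  ν + Real.sinh ((1 - ν) * t) / (t * Real.cosh t)

theorem sub_add_cosh_mul_tanh_eq_sigmaFun (ν : ℝ) {t : ℝ} (ht : t ≠ 0) :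
    ν - Real.sinh (ν * t) / t + Real.cosh (ν * t) * Real.tanh t / t = sigmaFun ν t := by
  have := (Real.cosh_pos t).ne'
  rw [sigmaFun, sub_mul, one_mul, Real.sinh_sub, Real.tanh_eq_sinh_div_cosh]
  field_simp
  ring

section SigmaFun

variable {ν t : ℝ}

theorem sinh_div_mul_cosh_nonneg (hν1 : ν ≤ 1) (ht : 0 < t) :
    0 ≤ Real.sinh ((1 - ν) * t) / (t * Real.cosh t) :=
  div_nonneg (Real.sinh_nonneg_iff.mpr (mul_nonneg (sub_nonneg.mpr hν1) ht.le))
    (mul_pos ht (Real.cosh_pos t)).le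

theorem sigmaFun_pos (hν0 : 0 ≤ ν) (hν1 : ν ≤ 1) (ht : 0 < t) : 0 < sigmaFun ν t := by
  rcases hν0.eq_or_lt with rfl | hν
  · have := Real.sinh_pos_iff.mpr ht
    have := Real.cosh_pos t
    simp only [sigmaFun, sub_zero, one_mul, zero_add]
    positivity
  · exact add_pos_of_pos_of_nonneg hν (sinh_div_mul_cosh_nonneg hν1 ht)

theorem sigmaFun_le_one (hν0 : 0 ≤ ν) (hν1 : ν ≤ 1) (ht : 0 < t) : sigmaFun ν t ≤ 1 := by
  have hu : 0 ≤ (1 - ν) * t := mul_nonneg (sub_nonneg.mpr hν1) ht.le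
  have hsinh : Real.sinh ((1 - ν) * t) ≤ (1 - ν) * (t * Real.cosh t) :=
    calc Real.sinh ((1 - ν) * t) ≤ (1 - ν) * t * Real.cosh ((1 - ν) * t) := sinh_le_mul_cosh hu
      _ ≤ (1 - ν) * t * Real.cosh t := by
        gcongr
        exact cosh_le_cosh_of_nonneg hu (mul_le_of_le_one_left ht.le (by linarith))
      _ = (1 - ν) * (t * Real.cosh t) := mul_assoc _ _ _
  have := (div_le_iff₀ (mul_pos ht (Real.cosh_pos t))).mpr hsinh
  rw [sigmaFun]
  linarith

theorem hasDerivAt_sigmaFun (ht : t ≠ 0) :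
    HasDerivAt (sigmaFun ν) (((1 - ν) * Real.cosh ((1 - ν) * t) * (t * Real.cosh t) -
      Real.sinh ((1 - ν) * t) * (Real.cosh t + t * Real.sinh t)) / (t * Real.cosh t) ^ 2) t := by
  have hnum : HasDerivAt (fun t ↦ Real.sinh ((1 - ν) * t))
      ((1 - ν) * Real.cosh ((1 - ν) * t)) t :=
    ((hasDerivAt_id t).const_mul (1 - ν)).sinh.congr_deriv (by simp [mul_comm])
  have hden : HasDerivAt (fun t ↦ t * Real.cosh t) (Real.cosh t + t * Real.sinh t) t :=
    ((hasDerivAt_id t).mul (Real.hasDerivAt_cosh t)).congr_deriv (by simp)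
  exact (hnum.div hden (mul_ne_zero ht (Real.cosh_pos t).ne')).const_add ν

theorem deriv_sigmaFun_nonpos (hν0 : 0 ≤ ν) (hν1 : ν ≤ 1) (ht : 0 < t) :
    deriv (sigmaFun ν) t ≤ 0 := by
  rw [(hasDerivAt_sigmaFun ht.ne').deriv]
  refine div_nonpos_of_nonpos_of_nonneg (sub_nonpos.mpr ?_) (sq_nonneg _)
  have := mul_cosh_mul_cosh_le (mul_nonneg (sub_nonneg.mpr hν1) ht.le)
    (mul_le_of_le_one_left ht.le (by linarith))
  linarith

theorem sigmaFun_add_mul_deriv_nonneg (hν0 : 0 ≤ ν) (hν1 : ν ≤ 1) (ht : 0 < t) :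
    0 ≤ sigmaFun ν t + t * deriv (sigmaFun ν) t := by
  have := Real.cosh_pos t
  have hsum : sigmaFun ν t + t * deriv (sigmaFun ν) t =
      (ν * (Real.cosh t * Real.cosh t) + (1 - ν) * (Real.cosh ((1 - ν) * t) * Real.cosh t) -
        Real.sinh ((1 - ν) * t) * Real.sinh t) / Real.cosh t ^ 2 := by
    rw [(hasDerivAt_sigmaFun ht.ne').deriv, sigmaFun]
    field_simp
    ring
  rw [hsum]
  refine div_nonneg (sub_nonneg.mpr ?_) (sq_nonneg _)
  calc Real.sinh ((1 - ν) * t) * Real.sinh t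
      ≤ Real.cosh ((1 - ν) * t) * Real.cosh t := sinh_mul_sinh_le_cosh_mul_cosh _ _
    _ = ν * (Real.cosh ((1 - ν) * t) * Real.cosh t) +
        (1 - ν) * (Real.cosh ((1 - ν) * t) * Real.cosh t) := by ring
    _ ≤ ν * (Real.cosh t * Real.cosh t) +
        (1 - ν) * (Real.cosh ((1 - ν) * t) * Real.cosh t) := by
      gcongr
      exact cosh_le_cosh_of_nonneg (mul_nonneg (sub_nonneg.mpr hν1) ht.le)
        (mul_le_of_le_one_left ht.le (by linarith))

theorem laplaceConvergent_sigmaFun (hν0 : 0 ≤ ν) (hν1 : ν ≤ 1) :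
    LaplaceConvergent (sigmaFun ν) := by
  have hmeas : Measurable (sigmaFun ν) := by unfold sigmaFun; fun_prop
  refine (laplaceConvergent_const 1).mono hmeas.aestronglyMeasurable fun t ht ↦ ?_
  rw [abs_of_pos (sigmaFun_pos hν0 hν1 ht)]
  exact sigmaFun_le_one hν0 hν1 ht

theorem tendsto_mul_sigmaFun_zero (hν0 : 0 ≤ ν) (hν1 : ν ≤ 1) :
    Tendsto (fun t ↦ t * sigmaFun ν t) (𝓝[>] 0) (𝓝 0) := by
  refine squeeze_zero' ?_ ?_ (tendsto_id.mono_left nhdsWithin_le_nhds) <;>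
    filter_upwards [self_mem_nhdsWithin] with t (ht : 0 < t)
  · exact mul_nonneg ht.le (sigmaFun_pos hν0 hν1 ht).le
  · exact mul_le_of_le_one_right ht.le (sigmaFun_le_one hν0 hν1 ht)

theorem logCompletelyMonotonic_laplaceTransform_sigmaFun (hν0 : 0 ≤ ν) (hν1 : ν ≤ 1) :
    LogCompletelyMonotonic (LaplaceTransform (sigmaFun ν)) :=
  logCompletelyMonotonic_laplaceTransform (laplaceConvergent_sigmaFun hν0 hν1)
    (fun _ ht ↦ sigmaFun_pos hν0 hν1 ht)
    (fun _ ht ↦ (hasDerivAt_sigmaFun ht.ne').differentiableAt.hasDerivAt)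
    (fun _ ht ↦ deriv_sigmaFun_nonpos hν0 hν1 ht)
    (fun _ ht ↦ sigmaFun_add_mul_deriv_nonneg hν0 hν1 ht) (tendsto_mul_sigmaFun_zero hν0 hν1)

end SigmaFun

/-! ### The representing measure of `ℒ(σ)` -/

/-- The terms of the expansion of `sinh ((1 - ν) t) / (t cosh t)` in powers of `e⁻⁴ᵗ`, obtained from
`sinh ((1 - ν) t) / cosh t = (e^(-νt) - e^(-(2-ν)t)) (1 - e⁻²ᵗ) / (1 - e⁻⁴ᵗ)`. -/
noncomputable def sigmaTerm (ν : ℝ) (j : ℕ) (t : ℝ) : ℝ :=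
  frullaniKernel (4 * j + ν) (4 * j + 2 - ν) t * (1 - Real.exp (-t * 2))

theorem exp_sub_exp_eq_mul_sinh (ν t : ℝ) :
    Real.exp (-t * ν) - Real.exp (-t * (2 - ν)) =
      2 * Real.exp (-t) * Real.sinh ((1 - ν) * t) := by
  have hminus : -t * ν = -t + (1 - ν) * t := by ring
  have hplus : -t * (2 - ν) = -t + -((1 - ν) * t) := by ring
  rw [Real.sinh_eq, hminus, hplus, Real.exp_add, Real.exp_add]
  ring

theorem two_mul_exp_neg_mul_cosh (t : ℝ) :
    2 * Real.exp (-t) * Real.cosh t = 1 + Real.exp (-t) ^ 2 := by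
  have hinv : Real.exp (-t) * Real.exp t = 1 := by
    rw [← Real.exp_add, neg_add_cancel, Real.exp_zero]
  rw [Real.cosh_eq]
  linear_combination hinv

section SigmaTerm

variable {ν : ℝ}

theorem sigmaTerm_nonneg (hν1 : ν ≤ 1) (j : ℕ) {t : ℝ} (ht : 0 < t) : 0 ≤ sigmaTerm ν j t :=
  mul_nonneg (frullaniKernel_nonneg (by linarith) ht)
    (sub_nonneg.mpr (Real.exp_le_one_iff.mpr (by linarith)))

theorem hasSum_sigmaTerm (ν : ℝ) {t : ℝ} (ht : 0 < t) :
    HasSum (fun j ↦ sigmaTerm ν j t) (Real.sinh ((1 - ν) * t) / (t * Real.cosh t)) := by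
  set r := Real.exp (-t)
  have hr_pos : 0 < r := Real.exp_pos _
  have hr_lt : r < 1 := Real.exp_lt_one_iff.mpr (neg_neg_of_pos ht)
  have hterm : ∀ j, sigmaTerm ν j t =
      2 * r * Real.sinh ((1 - ν) * t) / t * (1 - r ^ 2) * (r ^ 4) ^ j := fun j ↦ by
    have hpow : ∀ n : ℕ, Real.exp (-t * n) = r ^ n := fun n ↦ by rw [mul_comm, Real.exp_nat_mul]
    rw [sigmaTerm, frullaniKernel, ← exp_sub_exp_eq_mul_sinh, ← pow_mul, ← hpow 2,
      ← hpow (4 * j), add_sub_assoc, mul_add, mul_add, Real.exp_add, Real.exp_add]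
    push_cast
    ring
  have hlimit : Real.sinh ((1 - ν) * t) / (t * Real.cosh t) =
      2 * r * Real.sinh ((1 - ν) * t) / t * (1 - r ^ 2) * (1 - r ^ 4)⁻¹ := by
    have hne : 1 - r ^ 2 ≠ 0 := (sub_pos.mpr (pow_lt_one₀ hr_pos.le hr_lt two_ne_zero)).ne'
    have hfactor : 1 - r ^ 4 = (1 - r ^ 2) * (2 * r * Real.cosh t) := by
      rw [two_mul_exp_neg_mul_cosh]
      ring
    have := Real.cosh_pos t
    rw [hfactor]
    field_simp
  simp only [hterm, hlimit]
  exact (hasSum_geometric_of_lt_one (by positivity)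
    (pow_lt_one₀ hr_pos.le hr_lt four_ne_zero)).mul_left _

end SigmaTerm

/-- The measure whose Laplace transform is `σ(t) / t`. -/
noncomputable def sigmaMeasure (ν : ℝ) : Measure ℝ :=
  ENNReal.ofReal ν • volume.restrict (Ioi 0) + Measure.sum fun j : ℕ ↦
    volume.restrict (Ioc (4 * j + ν) (4 * j + 2 - ν)) ∗ volume.restrict (Ioc 0 2)

instance sFinite_sigmaMeasure (ν : ℝ) : SFinite (sigmaMeasure ν) := by
  unfold sigmaMeasure
  infer_instance

section SigmaMeasure

variable {ν : ℝ}

theorem sigmaMeasure_Iio_zero (hν0 : 0 ≤ ν) : sigmaMeasure ν (Iio 0) = 0 := by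
  have hrestrict : ∀ {s : Set ℝ}, s ⊆ Ici 0 → volume.restrict s (Iio 0) = 0 := fun hs ↦ by
    rw [Measure.restrict_apply measurableSet_Iio, disjoint_iff_inter_eq_empty.mp
      ((Iio_disjoint_Ici le_rfl).mono_right hs), measure_empty]
  have hterm : ∀ j : ℕ, (volume.restrict (Ioc (4 * j + ν) (4 * j + 2 - ν)) ∗
      volume.restrict (Ioc 0 2)) (Iio 0) = 0 := fun j ↦
    conv_Iio_zero_eq_zero (hrestrict fun s hs ↦ by
      rw [mem_Ici]; linarith [hs.1, Nat.cast_nonneg (α := ℝ) j]) (hrestrict fun s hs ↦ hs.1.le)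
  rw [sigmaMeasure, Measure.add_apply, Measure.smul_apply, hrestrict Ioi_subset_Ici_self,
    Measure.sum_apply _ measurableSet_Iio]
  simp [hterm]

theorem measureLaplace_conv_restrict_Ioc (hν1 : ν ≤ 1) (j : ℕ) {t : ℝ} (ht : 0 < t) :
    measureLaplace (volume.restrict (Ioc (4 * j + ν) (4 * j + 2 - ν)) ∗
      volume.restrict (Ioc 0 2)) t = ENNReal.ofReal (sigmaTerm ν j t / t) := by
  have hj : 4 * j + ν ≤ 4 * j + 2 - ν := by linarith
  have hquot : sigmaTerm ν j t / t =
      frullaniKernel (4 * j + ν) (4 * j + 2 - ν) t * frullaniKernel 0 2 t := by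
    simp only [sigmaTerm, frullaniKernel, mul_zero, Real.exp_zero, mul_div_assoc]
  rw [measureLaplace_conv, measureLaplace_restrict_Ioc ht.ne' hj,
    measureLaplace_restrict_Ioc ht.ne' zero_le_two, hquot,
    ENNReal.ofReal_mul (frullaniKernel_nonneg hj ht)]

theorem measureLaplace_sigmaMeasure (hν0 : 0 ≤ ν) (hν1 : ν ≤ 1) {t : ℝ} (ht : 0 < t) :
    measureLaplace (sigmaMeasure ν) t = ENNReal.ofReal (sigmaFun ν t / t) := by
  have hsum := (hasSum_sigmaTerm ν ht).div_const t
  have hnonneg : ∀ j, 0 ≤ sigmaTerm ν j t / t := fun j ↦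
    div_nonneg (sigmaTerm_nonneg hν1 j ht) ht.le
  rw [sigmaMeasure, measureLaplace_add, measureLaplace_smul, measureLaplace_sum,
    measureLaplace_restrict_Ioi_zero ht]
  simp only [measureLaplace_conv_restrict_Ioc hν1 _ ht]
  rw [← ENNReal.ofReal_tsum_of_nonneg hnonneg hsum.summable, hsum.tsum_eq,
    ← ENNReal.ofReal_mul hν0, ← ENNReal.ofReal_add (by positivity) (hsum.nonneg hnonneg),
    mul_one_div, ← add_div, sigmaFun]

theorem isGenStieltjes_laplaceTransform_sigmaFun (hν0 : 0 ≤ ν) (hν1 : ν ≤ 1) :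
    IsGenStieltjes 2 (LaplaceTransform (sigmaFun ν)) := by
  have hcancel : EqOn (fun t ↦ t ^ ((2 : ℝ) - 1) * (sigmaFun ν t / t)) (sigmaFun ν) (Ioi 0) :=
    fun t (ht : 0 < t) ↦ by
      norm_num
      exact mul_div_cancel₀ _ ht.ne'
  rw [← laplaceTransform_congr hcancel]
  exact isGenStieltjes_laplaceTransform_rpow_mul two_pos (sigmaMeasure_Iio_zero hν0)
    (fun t ht ↦ div_nonneg (sigmaFun_pos hν0 hν1 ht).le ht.le)
    (fun t ht ↦ measureLaplace_sigmaMeasure hν0 hν1 ht)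
    ((laplaceConvergent_sigmaFun hν0 hν1).congr hcancel)

end SigmaMeasure

/-! ### The Gamma quotient -/

section GammaQuotient

variable {a b c d : ℝ}

theorem prod_add_div_eq_GammaSeq (habcd : a + b = c + d) {n : ℕ} (hn : n ≠ 0) :
    ∏ j ∈ Finset.range (n + 1), (c + j) * (d + j) / ((a + j) * (b + j)) =
      Real.GammaSeq a n * Real.GammaSeq b n / (Real.GammaSeq c n * Real.GammaSeq d n) := by
  have hn_pos : (0 : ℝ) < n := Nat.cast_pos.mpr hn.bot_lt
  have hpow : (n : ℝ) ^ a * (n : ℝ) ^ b = (n : ℝ) ^ c * (n : ℝ) ^ d := by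
    rw [← Real.rpow_add hn_pos, ← Real.rpow_add hn_pos, habcd]
  have hnum : (n : ℝ) ^ a * n.factorial * ((n : ℝ) ^ b * n.factorial) =
      (n : ℝ) ^ c * n.factorial * ((n : ℝ) ^ d * n.factorial) := by
    linear_combination (n.factorial : ℝ) ^ 2 * hpow
  have hne : (n : ℝ) ^ c * n.factorial * ((n : ℝ) ^ d * n.factorial) ≠ 0 := by positivity
  simp only [Finset.prod_div_distrib, Finset.prod_mul_distrib, Real.GammaSeq]
  rw [div_mul_div_comm, div_mul_div_comm, hnum, div_div_div_cancel_left' _ _ hne]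

theorem tendsto_prod_add_div_Gamma (habcd : a + b = c + d) (hc : 0 < c) (hd : 0 < d) :
    Tendsto (fun n ↦ ∏ j ∈ Finset.range n, (c + j) * (d + j) / ((a + j) * (b + j))) atTop
      (𝓝 (Real.Gamma a * Real.Gamma b / (Real.Gamma c * Real.Gamma d))) := by
  rw [← tendsto_add_atTop_iff_nat 1]
  have hlim := ((Real.GammaSeq_tendsto_Gamma a).mul (Real.GammaSeq_tendsto_Gamma b)).div
    ((Real.GammaSeq_tendsto_Gamma c).mul (Real.GammaSeq_tendsto_Gamma d))
    (mul_pos (Real.Gamma_pos_of_pos hc) (Real.Gamma_pos_of_pos hd)).ne'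
  refine hlim.congr' ?_
  filter_upwards [eventually_ne_atTop 0] with n hn
  exact (prod_add_div_eq_GammaSeq habcd hn).symm

theorem tendsto_sum_log_add_div_Gamma (habcd : a + b = c + d) (ha : 0 < a) (hb : 0 < b)
    (hc : 0 < c) (hd : 0 < d) :
    Tendsto (fun n : ℕ ↦ ∑ j ∈ Finset.range n, Real.log ((c + j) * (d + j) / ((a + j) * (b + j))))
      atTop (𝓝 (Real.log (Real.Gamma a * Real.Gamma b / (Real.Gamma c * Real.Gamma d)))) := by
  have hne : Real.Gamma a * Real.Gamma b / (Real.Gamma c * Real.Gamma d) ≠ 0 := by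
    have := Real.Gamma_pos_of_pos ha
    have := Real.Gamma_pos_of_pos hb
    have := Real.Gamma_pos_of_pos hc
    have := Real.Gamma_pos_of_pos hd
    positivity
  refine ((tendsto_prod_add_div_Gamma habcd hc hd).log hne).congr fun n ↦ ?_
  exact Real.log_prod fun j _ ↦ by positivity

end GammaQuotient

section GammaFormula

variable {ν x : ℝ}

theorem sigmaTerm_eq_sub (ν : ℝ) (j : ℕ) (t : ℝ) :
    sigmaTerm ν j t = frullaniKernel (4 * j + ν) (4 * j + 2 - ν) t -
      frullaniKernel (4 * j + ν + 2) (4 * j + 2 - ν + 2) t := by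
  simp only [sigmaTerm, frullaniKernel, mul_add, Real.exp_add]
  ring

theorem laplaceConvergent_sigmaTerm (hν0 : 0 ≤ ν) (hν1 : ν ≤ 1) (j : ℕ) :
    LaplaceConvergent (sigmaTerm ν j) := by
  rw [funext (sigmaTerm_eq_sub ν j)]
  exact (laplaceConvergent_frullaniKernel (by positivity) (by linarith)).sub
    (laplaceConvergent_frullaniKernel (by positivity) (by linarith))

theorem laplaceTransform_sigmaTerm (hν0 : 0 ≤ ν) (hν1 : ν ≤ 1) (j : ℕ) (hx : 0 < x) :
    LaplaceTransform (sigmaTerm ν j) x =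
      Real.log (((x - ν) / 4 + 1 / 2 + j) * ((x + ν) / 4 + 1 / 2 + j) /
        (((x - ν) / 4 + 1 + j) * ((x + ν) / 4 + j))) := by
  have := Nat.cast_nonneg (α := ℝ) j
  have ha : 0 ≤ 4 * j + ν := by positivity
  have hab : 4 * j + ν ≤ 4 * j + 2 - ν := by linarith
  rw [funext (sigmaTerm_eq_sub ν j), LaplaceConvergent.laplaceTransform_sub
      (laplaceConvergent_frullaniKernel ha hab)
      (laplaceConvergent_frullaniKernel (by linarith) (by linarith)) hx,
    laplaceTransform_frullaniKernel ha hab hx,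
    laplaceTransform_frullaniKernel (by linarith) (by linarith) hx]
  have hA : 0 < x + (4 * j + ν) := by linarith
  have hB : 0 < x + (4 * j + 2 - ν) := by linarith
  have hA' : 0 < x + (4 * j + ν + 2) := by linarith
  have hB' : 0 < x + (4 * j + 2 - ν + 2) := by linarith
  have hden : 0 < ((x - ν) / 4 + 1 + j) * ((x + ν) / 4 + j) :=
    mul_pos (by linarith) (by linarith)
  rw [← Real.log_div (div_pos hB hA).ne' (div_pos hB' hA').ne', div_div_div_eq]
  congr 1
  rw [div_eq_div_iff (mul_pos hA hB').ne' hden.ne']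
  ring

theorem hasSum_laplaceTransform_sigmaTerm (hν0 : 0 ≤ ν) (hν1 : ν ≤ 1) (hx : 0 < x) :
    HasSum (fun j ↦ LaplaceTransform (sigmaTerm ν j) x)
      (Real.log (Real.Gamma ((x - ν) / 4 + 1) * Real.Gamma ((x + ν) / 4) /
        (Real.Gamma ((x - ν) / 4 + 1 / 2) * Real.Gamma ((x + ν) / 4 + 1 / 2)))) := by
  have hnonneg : ∀ j, 0 ≤ LaplaceTransform (sigmaTerm ν j) x := fun j ↦
    setIntegral_nonneg measurableSet_Ioi fun t ht ↦
      mul_nonneg (Real.exp_nonneg _) (sigmaTerm_nonneg hν1 j ht)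
  rw [hasSum_iff_tendsto_nat_of_nonneg hnonneg]
  simp only [laplaceTransform_sigmaTerm hν0 hν1 _ hx]
  exact tendsto_sum_log_add_div_Gamma (by ring) (by linarith) (by linarith) (by linarith)
    (by linarith)

theorem laplaceTransform_sigmaFun (hν0 : 0 ≤ ν) (hν1 : ν ≤ 1) (hx : 0 < x) :
    LaplaceTransform (sigmaFun ν) x = ν / x +
      Real.log (Real.Gamma ((x - ν) / 4 + 1) * Real.Gamma ((x + ν) / 4) /
        (Real.Gamma ((x - ν) / 4 + 1 / 2) * Real.Gamma ((x + ν) / 4 + 1 / 2))) := by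
  have hsum := hasSum_laplaceTransform_sigmaTerm hν0 hν1 hx
  have hseries : HasSum (fun j ↦ LaplaceTransform (sigmaTerm ν j) x)
      (LaplaceTransform (fun t ↦ Real.sinh ((1 - ν) * t) / (t * Real.cosh t)) x) :=
    LaplaceConvergent.hasSum_laplaceTransform (laplaceConvergent_sigmaTerm hν0 hν1)
      (fun j _ ht ↦ sigmaTerm_nonneg hν1 j ht) (fun _ ht ↦ hasSum_sigmaTerm ν ht) hx hsum.summable
  have hconv : LaplaceConvergent fun t ↦ Real.sinh ((1 - ν) * t) / (t * Real.cosh t) := by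
    simpa [sigmaFun] using (laplaceConvergent_sigmaFun hν0 hν1).sub (laplaceConvergent_const ν)
  unfold sigmaFun
  rw [(laplaceConvergent_const ν).laplaceTransform_add hconv hx, laplaceTransform_const ν hx,
    hseries.unique hsum]

end GammaFormula

/-- Theorem: for `0 ≤ ν ≤ 1`, `σ(x) = ν - sinh(νx)/x + cosh(νx) tanh(x)/x`
(equivalently `σ(x) = ν + sinh((1-ν)x)/(x cosh x)`) has Laplace transform a generalized
Stieltjes function of order 2 (hence `σ` is infinitely divisible), and
`L(σ)(x) = ν/x + log(Γ((x-ν)/4+1)Γ((x+ν)/4)/(Γ((x-ν)/4+1/2)Γ((x+ν)/4+1/2)))`. -/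
theorem stmt11 (ν : ℝ) (hν0 : 0 ≤ ν) (hν1 : ν ≤ 1) :
    (∀ x : ℝ, 0 < x →
      ν - Real.sinh (ν * x) / x + Real.cosh (ν * x) * Real.tanh x / x
        = ν + Real.sinh ((1 - ν) * x) / (x * Real.cosh x)) ∧
    IsGenStieltjes 2 (LaplaceTransform
      (fun x => ν - Real.sinh (ν * x) / x + Real.cosh (ν * x) * Real.tanh x / x)) ∧
    LogCompletelyMonotonic (LaplaceTransform
      (fun x => ν - Real.sinh (ν * x) / x + Real.cosh (ν * x) * Real.tanh x / x)) ∧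
    ∀ x : ℝ, 0 < x →
      LaplaceTransform
          (fun x => ν - Real.sinh (ν * x) / x + Real.cosh (ν * x) * Real.tanh x / x) x
        = ν / x + Real.log
            (Real.Gamma ((x - ν) / 4 + 1) * Real.Gamma ((x + ν) / 4) /
              (Real.Gamma ((x - ν) / 4 + 1 / 2) * Real.Gamma ((x + ν) / 4 + 1 / 2))) := by
  have hform : EqOn (fun t ↦ ν - Real.sinh (ν * t) / t + Real.cosh (ν * t) * Real.tanh t / t)
      (sigmaFun ν) (Ioi 0) := fun t ht ↦ sub_add_cosh_mul_tanh_eq_sigmaFun ν (ne_of_gt ht)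
  rw [laplaceTransform_congr hform]
  exact ⟨fun x hx ↦ hform hx, isGenStieltjes_laplaceTransform_sigmaFun hν0 hν1,
    logCompletelyMonotonic_laplaceTransform_sigmaFun hν0 hν1,
    fun x hx ↦ laplaceTransform_sigmaFun hν0 hν1 hx⟩
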